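/- Let G be a context-free grammar in Chomsky normal form with T nonterminals over a finite alphabet Σ, and let M be a safety NFA over Σ with state set Q of size n (every state of M is accepting) in which every state is reachable from the set of initial states. Let B = (2^{T+1} − 2)·n + 2^T. Then the following conditions are equivalent: (i) ed(L(G), M.accepts) = ⊤ (the edit distance is infinite); (ii) ed(L(G), M.accepts) > B; (iii) there exists a word w ∈ L(G) together with a compact G-decomposition w = s₁u₁⋯s_k u_k s_{k+1} such that the nested reachability set R(u_k, R(u_{k−1}, …, R(u₁, Q)…)) is empty. -/

import Mathlib

namespace Levenshtein

/-- A cost structure for Levenshtein edit distance. -/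
structure Cost (α β δ : Type*) where
  /-- Cost to delete an element from a list. -/
  delete : α → δ
  /-- Cost to insert an element into a list. -/
  insert : β → δ
  /-- Cost to substitute one element for another in a list. -/
  substitute : α → β → δ

/-- The default cost structure, for which all operations cost `1`. -/
def defaultCost {α : Type*} [DecidableEq α] : Cost α α ℕ where
  delete _ := 1
  insert _ := 1
  substitute a b := if a = b then 0 else 1

/-- (Implementation detail for `levenshtein`) -/
def impl {α β δ : Type*} [AddZeroClass δ] [Min δ] (C : Cost α β δ)
    (xs : List α) (y : β) (d : {r : List δ // 0 < r.length}) : {r : List δ // 0 < r.length} :=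
  let ⟨ds, w⟩ := d
  xs.zip (ds.zip ds.tail) |>.foldr
    (init := ⟨[C.insert y + ds.getLast (List.length_pos_iff.mp w)], by simp⟩)
    (fun ⟨x, d₀, d₁⟩ ⟨r, w⟩ =>
      ⟨min (C.delete x + r[0]) (min (C.insert y + d₀) (C.substitute x y + d₁)) :: r, by simp⟩)

end Levenshtein

/-- `suffixLevenshtein C xs ys` computes the Levenshtein distance
(using the cost functions provided by a `C : Cost α β δ`)
from each suffix of the list `xs` to the list `ys`. -/
def suffixLevenshtein {α β δ : Type*} [AddZeroClass δ] [Min δ] (C : Levenshtein.Cost α β δ)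
    (xs : List α) (ys : List β) : {r : List δ // 0 < r.length} :=
  ys.foldr
    (Levenshtein.impl C xs)
    (xs.foldr (init := ⟨[0], by simp⟩) (fun a ⟨r, w⟩ => ⟨(C.delete a + r[0]) :: r, by simp⟩))

/-- `levenshtein C xs ys` computes the Levenshtein distance
(using the cost functions provided by a `C : Cost α β δ`)
from the list `xs` to the list `ys`. -/
def levenshtein {α β δ : Type*} [AddZeroClass δ] [Min δ] (C : Levenshtein.Cost α β δ)
    (xs : List α) (ys : List β) : δ :=
  let ⟨r, w⟩ := suffixLevenshtein C xs ys
  r[0]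

/-- Context-free grammar that generates words over the alphabet `T` (a type of terminals),
with nonterminals in an arbitrary universe. -/
structure ContextFreeGrammarU.{uN, uT} (T : Type uT) where
  /-- Type of nonterminals. -/
  NT : Type uN
  /-- Initial nonterminal. -/
  initial : NT
  /-- Rewrite rules. -/
  rules : Finset (ContextFreeRule T NT)

/-- One step of context-free transformation. -/
def ContextFreeGrammarU.Produces {T : Type*} (g : ContextFreeGrammarU T)
    (u v : List (Symbol T g.NT)) : Prop :=
  ∃ r ∈ g.rules, r.Rewrites u v

/-- Any number of steps of context-free transformation. -/
abbrev ContextFreeGrammarU.Derives {T : Type*} (g : ContextFreeGrammarU T) :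
    List (Symbol T g.NT) → List (Symbol T g.NT) → Prop :=
  Relation.ReflTransGen g.Produces

/-- `g.Generates s` means that `g` can transform its initial nonterminal to `s`. -/
def ContextFreeGrammarU.Generates {T : Type*} (g : ContextFreeGrammarU T)
    (s : List (Symbol T g.NT)) : Prop :=
  g.Derives [Symbol.nonterminal g.initial] s

/-- The language (set of words) that can be generated by a given context-free grammar `g`. -/
def ContextFreeGrammarU.language {T : Type*} (g : ContextFreeGrammarU T) : Language T :=
  { w : List T | g.Generates (w.map Symbol.terminal) }

/-- Levenshtein edit distance between two words. -/
def ed {α : Type*} [DecidableEq α] (w₁ w₂ : List α) : ℕ :=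
  levenshtein Levenshtein.defaultCost w₁ w₂

/-- Edit distance from a word to a language, valued in `ℕ∞`. -/
noncomputable def edWordLang {α : Type*} [DecidableEq α] (w : List α) (L : Language α) : ℕ∞ :=
  ⨅ w' ∈ L, (ed w w' : ℕ∞)

/-- Edit distance from language `L₁` to language `L₂`, valued in `ℕ∞`. -/
noncomputable def edLang {α : Type*} [DecidableEq α] (L₁ L₂ : Language α) : ℕ∞ :=
  ⨆ w ∈ L₁, edWordLang w L₂

/-- `u ^ ℓ` : concatenation of `ℓ` copies of `u`. -/
def wpow {α : Type*} (u : List α) (ℓ : ℕ) : List α := (List.replicate ℓ u).flatten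

/-- The interleaved concatenation `s₁u₁s₂u₂⋯s_k u_k s_{k+1}` where
`ss = [s₁, …, s_{k+1}]` and `us = [u₁, …, u_k]`. -/
def weave {α : Type*} (ss us : List (List α)) : List α :=
  (List.zipWith (· ++ ·) ss us).flatten ++ (ss.drop us.length).flatten

/-- A context-free grammar is in Chomsky normal form. -/
def ContextFreeGrammarU.IsCNF {α : Type*} (G : ContextFreeGrammarU α) : Prop :=
  ∀ r ∈ G.rules,
    (∃ z u : G.NT, r.output = [Symbol.nonterminal z, Symbol.nonterminal u]) ∨
    (∃ a : α, r.output = [Symbol.terminal a]) ∨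
    (r.input = G.initial ∧ r.output = [])

/-- Compact `G`-decomposition of the word `w`. -/
def IsCompactDecomp {α : Type*} (G : ContextFreeGrammarU α) [Fintype G.NT]
    (w : List α) (ss us : List (List α)) : Prop :=
  ss.length = us.length + 1 ∧ w = weave ss us ∧
  (∀ ℓ : ℕ, weave ss (us.map (fun u => wpow u ℓ)) ∈ G.language) ∧
  (ss.map List.length).sum ≤ 2 ^ Fintype.card G.NT ∧
  us.length ≤ 2 ^ (Fintype.card G.NT + 1) - 2

/-- The reachability set `R(u, S')`: states reachable (by any word) from the set of states
reachable from `S'` upon reading `u`. -/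
def reachSet {α σ : Type*} (M : NFA α σ) (u : List α) (S' : Set σ) : Set σ :=
  { q | ∃ v : List α, q ∈ M.evalFrom (M.evalFrom S' u) v }

/-- Prefix closure of a language. -/
def prefLang {α : Type*} (L : Language α) : Language α := { u | ∃ v, u ++ v ∈ L }

/-!
Every word of the language has a compact decomposition: in a derivation tree with root `A`, a lowest
node labelled `A` yields a context that can be pumped, and below that node only the other
nonterminals occur. Since rules have at most two symbols on the right, each nonterminal used up at
most doubles the separators and the number of pumped factors, up to the two new factors.

If the nested reachability set is empty, pump the decomposition `ℓ` times. Fewer than `ℓ` edits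
leave a copy of every `u_i` intact, so a run of the automaton on the edited word would pass through
`u₁, …, u_k` in order and end in the nested reachability set. Hence the distance is unbounded.
If it is nonempty, keep each `u_i` and replace each separator by a path of fewer than `n` letters;
since all states are accepting, this gives an accepted word at distance at most `B`.
-/

/-! ### The Levenshtein recursion -/

section Levenshtein

variable {α β δ : Type*} [AddZeroClass δ] [Min δ] (C : Levenshtein.Cost α β δ)

theorem suffixLevenshtein_nil_left (ys : List β) :
    (suffixLevenshtein C [] ys).1 = [levenshtein C [] ys] := by
  cases ys <;> rfl

theorem levenshtein_impl_cons (x : α) (xs : List α) (y : β) (d : δ)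
    (ds : {r : List δ // 0 < r.length}) :
    (Levenshtein.impl C (x :: xs) y ⟨d :: ds.1, by simp⟩).1 =
      min (C.delete x + (Levenshtein.impl C xs y ds).1[0]'(Levenshtein.impl C xs y ds).2)
        (min (C.insert y + d) (C.substitute x y + ds.1[0]'ds.2)) ::
        (Levenshtein.impl C xs y ds).1 := by
  obtain ⟨_ | ⟨e, ds⟩, hds⟩ := ds
  · simp at hds
  · rfl

theorem suffixLevenshtein_cons_left (x : α) (xs : List α) (ys : List β) :
    (suffixLevenshtein C (x :: xs) ys).1 =
      levenshtein C (x :: xs) ys :: (suffixLevenshtein C xs ys).1 := by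
  induction ys with
  | nil => rfl
  | cons y ys ih =>
    have hstep : (suffixLevenshtein C (x :: xs) (y :: ys)).1 = _ :: _ :=
      (congrArg (fun d => (Levenshtein.impl C (x :: xs) y d).1) (Subtype.ext ih)).trans
        (levenshtein_impl_cons C x xs y _ (suffixLevenshtein C xs ys))
    simp only [levenshtein, hstep]
    rfl

theorem levenshtein_nil_nil : levenshtein C [] [] = 0 := rfl

theorem levenshtein_cons_nil (x : α) (xs : List α) :
    levenshtein C (x :: xs) [] = C.delete x + levenshtein C xs [] := rfl

theorem levenshtein_nil_cons (y : β) (ys : List β) :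
    levenshtein C [] (y :: ys) = C.insert y + levenshtein C [] ys := by
  change C.insert y + (suffixLevenshtein C [] ys).1.getLast _ = _
  simp only [suffixLevenshtein_nil_left, List.getLast_singleton]

theorem levenshtein_cons_cons (x : α) (xs : List α) (y : β) (ys : List β) :
    levenshtein C (x :: xs) (y :: ys) =
      min (C.delete x + levenshtein C xs (y :: ys))
        (min (C.insert y + levenshtein C (x :: xs) ys)
          (C.substitute x y + levenshtein C xs ys)) := by
  have hstep : (suffixLevenshtein C (x :: xs) (y :: ys)).1 = _ :: _ :=
    (congrArg (fun d => (Levenshtein.impl C (x :: xs) y d).1)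
      (Subtype.ext (suffixLevenshtein_cons_left C x xs ys))).trans
      (levenshtein_impl_cons C x xs y _ (suffixLevenshtein C xs ys))
  simp only [levenshtein, hstep]
  rfl

end Levenshtein

/-! ### Alignments -/

/-- `EditAlignment C xs ys n`: the word `xs` can be turned into `ys` by a left-to-right sequence of
deletions, insertions and substitutions of total cost `n`; a matched letter counts as a
substitution. -/
inductive EditAlignment {α β δ : Type*} [AddZeroClass δ] (C : Levenshtein.Cost α β δ) :
    List α → List β → δ → Prop
  | nil : EditAlignment C [] [] 0
  | delete (x : α) {xs : List α} {ys : List β} {n : δ} :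
      EditAlignment C xs ys n → EditAlignment C (x :: xs) ys (C.delete x + n)
  | insert (y : β) {xs : List α} {ys : List β} {n : δ} :
      EditAlignment C xs ys n → EditAlignment C xs (y :: ys) (C.insert y + n)
  | substitute (x : α) (y : β) {xs : List α} {ys : List β} {n : δ} :
      EditAlignment C xs ys n → EditAlignment C (x :: xs) (y :: ys) (C.substitute x y + n)

namespace EditAlignment

variable {α β δ : Type*} {C : Levenshtein.Cost α β δ}

theorem append [AddMonoid δ] {xs xs' : List α} {ys ys' : List β} {m n : δ}
    (h : EditAlignment C xs ys m) (h' : EditAlignment C xs' ys' n) :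
    EditAlignment C (xs ++ xs') (ys ++ ys') (m + n) := by
  induction h with
  | nil => simpa using h'
  | delete x _ ih => rw [add_assoc]; exact ih.delete x
  | insert y _ ih => rw [add_assoc]; exact ih.insert y
  | substitute x y _ ih => rw [add_assoc]; exact ih.substitute x y

theorem exists_of_append_left [AddMonoid δ] {xs xs' : List α} {zs : List β} {n : δ}
    (h : EditAlignment C (xs ++ xs') zs n) :
    ∃ ys ys' i j, zs = ys ++ ys' ∧ n = i + j ∧
      EditAlignment C xs ys i ∧ EditAlignment C xs' ys' j := by
  generalize hw : xs ++ xs' = w at h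
  induction h generalizing xs with
  | nil =>
    obtain ⟨rfl, rfl⟩ := List.append_eq_nil_iff.1 hw
    exact ⟨[], [], 0, 0, rfl, (add_zero 0).symm, nil, nil⟩
  | @delete x w zs n h ih =>
    rcases List.append_eq_cons_iff.1 hw with ⟨rfl, rfl⟩ | ⟨xs, rfl, rfl⟩
    · exact ⟨[], zs, 0, _, rfl, (zero_add _).symm, nil, h.delete x⟩
    · obtain ⟨ys, ys', i, j, rfl, rfl, hi, hj⟩ := ih rfl
      exact ⟨ys, ys', _, j, rfl, (add_assoc _ _ _).symm, hi.delete x, hj⟩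
  | insert y _ ih =>
    obtain ⟨ys, ys', i, j, rfl, rfl, hi, hj⟩ := ih hw
    exact ⟨y :: ys, ys', _, j, rfl, (add_assoc _ _ _).symm, hi.insert y, hj⟩
  | @substitute x y w zs n h ih =>
    rcases List.append_eq_cons_iff.1 hw with ⟨rfl, rfl⟩ | ⟨xs, rfl, rfl⟩
    · exact ⟨[], y :: zs, 0, _, rfl, (zero_add _).symm, nil, h.substitute x y⟩
    · obtain ⟨ys, ys', i, j, rfl, rfl, hi, hj⟩ := ih rfl
      exact ⟨y :: ys, ys', _, j, rfl, (add_assoc _ _ _).symm, hi.substitute x y, hj⟩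

theorem levenshtein_le [AddZeroClass δ] [LinearOrder δ] [AddLeftMono δ] {xs : List α}
    {ys : List β} {n : δ} (h : EditAlignment C xs ys n) : levenshtein C xs ys ≤ n := by
  induction h with
  | nil => exact (levenshtein_nil_nil C).le
  | @delete x xs ys n _ ih =>
    refine le_trans ?_ (add_le_add_right ih _)
    cases ys with
    | nil => exact (levenshtein_cons_nil C x xs).le
    | cons y ys => exact (levenshtein_cons_cons C x xs y ys).trans_le (min_le_left _ _)
  | @insert y xs ys n _ ih =>
    refine le_trans ?_ (add_le_add_right ih _)
    cases xs with
    | nil => exact (levenshtein_nil_cons C y ys).le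
    | cons x xs =>
      exact (levenshtein_cons_cons C x xs y ys).trans_le
        ((min_le_right _ _).trans (min_le_left _ _))
  | @substitute x y xs ys n _ ih =>
    exact (levenshtein_cons_cons C x xs y ys).trans_le
      ((min_le_right _ _).trans ((min_le_right _ _).trans (add_le_add_right ih _)))

end EditAlignment

theorem editAlignment_levenshtein {α β δ : Type*} [AddZeroClass δ] [LinearOrder δ]
    (C : Levenshtein.Cost α β δ) (xs : List α) (ys : List β) :
    EditAlignment C xs ys (levenshtein C xs ys) := by
  induction xs generalizing ys with
  | nil =>
    induction ys with
    | nil => exact .nil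
    | cons y ys ih => exact levenshtein_nil_cons C y ys ▸ ih.insert y
  | cons x xs ih =>
    induction ys with
    | nil => exact levenshtein_cons_nil C x xs ▸ (ih []).delete x
    | cons y ys ih' =>
      rw [levenshtein_cons_cons]
      exact min_rec' _ ((ih _).delete x) (min_rec' _ (ih'.insert y) ((ih ys).substitute x y))

/-! ### The edit distance of words -/

section Ed

variable {α : Type*} [DecidableEq α]

theorem ed_cons_cons (x : α) (xs : List α) (y : α) (ys : List α) :
    ed (x :: xs) (y :: ys) =
      min (1 + ed xs (y :: ys)) (min (1 + ed (x :: xs) ys) ((if x = y then 0 else 1) + ed xs ys)) :=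
  levenshtein_cons_cons _ x xs y ys

theorem ed_nil_right (xs : List α) : ed xs [] = xs.length := by
  induction xs with
  | nil => rfl
  | cons x xs ih => rw [List.length_cons, ← ih, add_comm]; rfl

theorem ed_nil_left (ys : List α) : ed [] ys = ys.length := by
  induction ys with
  | nil => rfl
  | cons y ys ih => rw [List.length_cons, ← ih, add_comm]; exact levenshtein_nil_cons _ y ys

theorem ed_self (xs : List α) : ed xs xs = 0 := by
  induction xs with
  | nil => rfl
  | cons x xs ih => simp [ed_cons_cons, ih]

theorem eq_of_ed_eq_zero {xs ys : List α} (h : ed xs ys = 0) : xs = ys := by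
  induction xs generalizing ys with
  | nil => exact (List.length_eq_zero_iff.1 (ed_nil_left ys ▸ h)).symm
  | cons x xs ih =>
    cases ys with
    | nil => simp [ed_nil_right] at h
    | cons y ys =>
      obtain ⟨rfl, hed⟩ : x = y ∧ ed xs ys = 0 := by simpa [ed_cons_cons] using h
      rw [ih hed]

theorem ed_append_append_le (xs xs' ys ys' : List α) :
    ed (xs ++ xs') (ys ++ ys') ≤ ed xs ys + ed xs' ys' :=
  ((editAlignment_levenshtein _ xs ys).append (editAlignment_levenshtein _ xs' ys')).levenshtein_le

theorem ed_le_length_add_length (xs ys : List α) : ed xs ys ≤ xs.length + ys.length := by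
  simpa [ed_nil_left, ed_nil_right] using ed_append_append_le xs [] [] ys

theorem exists_append_ed_add_ed_le (xs xs' zs : List α) :
    ∃ ys ys', zs = ys ++ ys' ∧ ed xs ys + ed xs' ys' ≤ ed (xs ++ xs') zs := by
  obtain ⟨ys, ys', i, j, hzs, hed, hi, hj⟩ :=
    (editAlignment_levenshtein Levenshtein.defaultCost (xs ++ xs') zs).exists_of_append_left
  exact ⟨ys, ys', hzs, (add_le_add hi.levenshtein_le hj.levenshtein_le).trans_eq hed.symm⟩

end Ed

/-! ### Powers and interleavings of words -/

section Words

variable {α : Type*}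

theorem wpow_succ (u : List α) (ℓ : ℕ) : wpow u (ℓ + 1) = u ++ wpow u ℓ := by
  simp [wpow, List.replicate_succ]

theorem wpow_succ_right (u : List α) (ℓ : ℕ) : wpow u (ℓ + 1) = wpow u ℓ ++ u := by
  simp [wpow, List.replicate_succ']

theorem wpow_one (u : List α) : wpow u 1 = u := by
  simp [wpow]

theorem wpow_append_append_wpow_mem {L : Set (List α)} {u v : List α}
    (hL : ∀ x ∈ L, u ++ x ++ v ∈ L) {x : List α} (hx : x ∈ L) (ℓ : ℕ) :
    wpow u ℓ ++ x ++ wpow v ℓ ∈ L := by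
  induction ℓ with
  | zero => simpa [wpow] using hx
  | succ ℓ ih =>
    rw [wpow_succ, wpow_succ_right]
    simpa using hL _ ih

theorem isInfix_of_ed_wpow_lt [DecidableEq α] {u y : List α} {ℓ : ℕ}
    (h : ed (wpow u ℓ) y < ℓ) : u <:+: y := by
  induction ℓ generalizing y with
  | zero => simp at h
  | succ ℓ ih =>
    rw [wpow_succ] at h
    obtain ⟨y₁, y₂, rfl, hed⟩ := exists_append_ed_add_ed_le u (wpow u ℓ) y
    by_cases hzero : ed u y₁ = 0
    · exact eq_of_ed_eq_zero hzero ▸ (List.prefix_append u y₂).isInfix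
    · exact (ih (by omega)).trans (List.suffix_append y₁ y₂).isInfix

theorem weave_cons_cons (s u : List α) (ss us : List (List α)) :
    weave (s :: ss) (u :: us) = s ++ (u ++ weave ss us) := by
  simp [weave]

theorem weave_singleton_nil (s : List α) : weave [s] [] = s := by
  simp [weave]

theorem weave_append_cons (s t : List α) (ss us : List (List α)) :
    weave ((s ++ t) :: ss) us = s ++ weave (t :: ss) us := by
  cases us <;> simp [weave]

-- The last separator of the first interleaving is glued to the first separator of the second.
theorem exists_weave_eq_weave_append_weave {ss ss' us us' : List (List α)}
    (hss : ss.length = us.length + 1) (hss' : ss'.length = us'.length + 1) :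
    ∃ ts : List (List α), ts.length = (us ++ us').length + 1 ∧
      (ts.map List.length).sum = (ss.map List.length).sum + (ss'.map List.length).sum ∧
      ∀ f : List α → List α, weave ts ((us ++ us').map f) =
        weave ss (us.map f) ++ weave ss' (us'.map f) := by
  induction us generalizing ss with
  | nil =>
    obtain ⟨s, rfl⟩ := List.length_eq_one_iff.1 hss
    obtain ⟨t, ss', rfl⟩ := List.exists_cons_of_length_eq_add_one hss'
    exact ⟨(s ++ t) :: ss', hss', by simp [add_assoc],
      fun f => by rw [List.nil_append, weave_append_cons, List.map_nil, weave_singleton_nil]⟩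
  | cons u us ih =>
    obtain ⟨s, ss, rfl⟩ := List.exists_cons_of_length_eq_add_one hss
    obtain ⟨ts, hlen, hsum, hweave⟩ := ih (Nat.succ_injective hss)
    exact ⟨s :: ts, congrArg (· + 1) hlen, by simp [hsum, add_assoc],
      fun f => by simpa [weave_cons_cons] using hweave f⟩

end Words

/-! ### Nested reachability sets -/

section Reachability

variable {α σ : Type*} (M : NFA α σ)

/-- The nested reachability set `R(u_k, R(u_{k-1}, …, R(u₁, S)…))` for `us = [u₁, …, u_k]`. -/
def nestedReachSet (us : List (List α)) (S : Set σ) : Set σ :=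
  us.foldl (fun S u => reachSet M u S) S

variable {M}

theorem nestedReachSet_cons (u : List α) (us : List (List α)) (S : Set σ) :
    nestedReachSet M (u :: us) S = nestedReachSet M us (reachSet M u S) := rfl

theorem evalFrom_subset_evalFrom {S T : Set σ} (h : S ⊆ T) (w : List α) :
    M.evalFrom S w ⊆ M.evalFrom T w := by
  rw [← Set.union_eq_self_of_subset_left h, NFA.evalFrom_union]
  exact Set.subset_union_left

theorem mem_reachSet_iff_exists {q : σ} {u : List α} {S : Set σ} :
    q ∈ reachSet M u S ↔ ∃ p ∈ S, q ∈ reachSet M u {p} := by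
  simp only [reachSet, Set.mem_ofPred_eq, ← NFA.evalFrom_append]
  constructor
  · rintro ⟨v, hq⟩
    obtain ⟨p, hp, hpq⟩ := NFA.mem_evalFrom_iff_exists.1 hq
    exact ⟨p, hp, v, hpq⟩
  · rintro ⟨p, hp, v, hpq⟩
    exact ⟨v, NFA.mem_evalFrom_iff_exists.2 ⟨p, hp, hpq⟩⟩

theorem evalFrom_reachSet_subset (u v : List α) (S : Set σ) :
    M.evalFrom (reachSet M u S) v ⊆ reachSet M u S := by
  intro q hq
  obtain ⟨p, ⟨v', hp⟩, hpq⟩ := NFA.mem_evalFrom_iff_exists.1 hq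
  refine ⟨v' ++ v, ?_⟩
  rw [NFA.evalFrom_append]
  exact NFA.mem_evalFrom_iff_exists.2 ⟨p, hp, hpq⟩

theorem mem_nestedReachSet_iff_exists {q : σ} {us : List (List α)} {S : Set σ} :
    q ∈ nestedReachSet M us S ↔ ∃ p ∈ S, q ∈ nestedReachSet M us {p} := by
  induction us generalizing S with
  | nil => simp [nestedReachSet]
  | cons u us ih =>
    simp only [nestedReachSet_cons, ih (S := reachSet M u _)]
    constructor
    · rintro ⟨p', hp', hq⟩
      obtain ⟨p, hp, hpp'⟩ := mem_reachSet_iff_exists.1 hp'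
      exact ⟨p, hp, p', hpp', hq⟩
    · rintro ⟨p, hp, p', hpp', hq⟩
      exact ⟨p', mem_reachSet_iff_exists.2 ⟨p, hp, hpp'⟩, hq⟩

-- A run on at least `card σ` letters visits a state twice; cut out the loop between the visits.
theorem exists_length_lt_length_mem_evalFrom [Fintype σ] {P : Set σ} {p : σ} {v : List α}
    (hp : p ∈ M.evalFrom P v) (hv : Fintype.card σ ≤ v.length) :
    ∃ v' : List α, v'.length < v.length ∧ p ∈ M.evalFrom P v' := by
  have hrun : ∀ i : Fin (v.length + 1), ∃ q ∈ M.evalFrom P (v.take i),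
      p ∈ M.evalFrom {q} (v.drop i) := fun i => by
    rw [← List.take_append_drop i v, NFA.evalFrom_append] at hp
    exact NFA.mem_evalFrom_iff_exists.1 hp
  choose state hbefore hafter using hrun
  have hnotInj : ¬ Function.Injective state := fun hinj => by
    have := Fintype.card_le_of_injective state hinj
    simp only [Fintype.card_fin] at this
    omega
  obtain ⟨i, j, heq, hne⟩ := Function.not_injective_iff.1 hnotInj
  wlog hij : i < j generalizing i j
  · exact this j i heq.symm hne.symm (lt_of_le_of_ne (not_lt.1 hij) hne.symm)
  refine ⟨v.take i ++ v.drop j, ?_, ?_⟩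
  · simp only [List.length_append, List.length_take, List.length_drop]
    omega
  · rw [NFA.evalFrom_append]
    exact NFA.mem_evalFrom_iff_exists.2 ⟨state i, hbefore i, heq ▸ hafter j⟩

theorem exists_length_lt_card_mem_evalFrom [Fintype σ] {P : Set σ} {p : σ} {v : List α}
    (hp : p ∈ M.evalFrom P v) :
    ∃ v' : List α, v'.length < Fintype.card σ ∧ p ∈ M.evalFrom P v' := by
  induction hn : v.length using Nat.strong_induction_on generalizing v with
  | _ n ih =>
    by_cases hv : v.length < Fintype.card σ
    · exact ⟨v, hv, hp⟩
    · obtain ⟨v', hlt, hp'⟩ := exists_length_lt_length_mem_evalFrom hp (not_lt.1 hv)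
      exact ih v'.length (hn ▸ hlt) hp' rfl

end Reachability

/-! ### Edit distance to a safety automaton -/

section SafetyDistance

variable {α σ : Type*} [DecidableEq α] {M : NFA α σ}

-- Every block `u_i ^ ℓ` of the first word keeps an intact copy of `u_i` in the second one.
theorem nestedReachSet_nonempty_of_ed_lt {ℓ : ℕ} {us ss : List (List α)} {S : Set σ} {y : List α}
    (hlen : ss.length = us.length + 1) (hclosed : ∀ v, M.evalFrom S v ⊆ S)
    (hed : ed (weave ss (us.map fun u => wpow u ℓ)) y < ℓ) (hy : (M.evalFrom S y).Nonempty) :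
    (nestedReachSet M us S).Nonempty := by
  induction us generalizing ss S y with
  | nil => exact hy.mono (hclosed y)
  | cons u us ih =>
    obtain ⟨s, ss, rfl⟩ := List.exists_cons_of_length_eq_add_one hlen
    rw [List.map_cons, weave_cons_cons] at hed
    set w := weave ss (us.map fun u => wpow u ℓ)
    obtain ⟨y₁, y', rfl, hed₁⟩ := exists_append_ed_add_ed_le s (wpow u ℓ ++ w) y
    obtain ⟨y₂, y₃, rfl, hed₂⟩ := exists_append_ed_add_ed_le (wpow u ℓ) w y'
    obtain ⟨a, b, rfl⟩ := isInfix_of_ed_wpow_lt (show ed (wpow u ℓ) y₂ < ℓ by omega)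
    have hreach : M.evalFrom S (y₁ ++ (a ++ u ++ b)) ⊆ reachSet M u S := fun q hq =>
      ⟨b, by
        simp only [NFA.evalFrom_append] at hq
        exact evalFrom_subset_evalFrom (evalFrom_subset_evalFrom
          ((evalFrom_subset_evalFrom (hclosed y₁) a).trans (hclosed a)) u) b hq⟩
    rw [← List.append_assoc, NFA.evalFrom_append] at hy
    exact ih (Nat.succ_injective hlen) (fun v => evalFrom_reachSet_subset u v S)
      (show ed w y₃ < ℓ by omega) (hy.mono (evalFrom_subset_evalFrom hreach y₃))

-- Replace each separator by a shortest path to the state from which the next `u_i` is read.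
theorem exists_evalFrom_nonempty_ed_weave_le [Fintype σ] {us ss : List (List α)} {P : Set σ}
    {p : σ} {v : List α} (hlen : ss.length = us.length + 1) (hp : p ∈ M.evalFrom P v)
    (hne : (nestedReachSet M us {p}).Nonempty) :
    ∃ y, (M.evalFrom P y).Nonempty ∧
      ed (weave ss us) y ≤ us.length * Fintype.card σ + (ss.map List.length).sum := by
  induction us generalizing ss P p v with
  | nil =>
    obtain ⟨s, rfl⟩ := List.length_eq_one_iff.1 hlen
    obtain ⟨q, hq, -⟩ := NFA.mem_evalFrom_iff_exists.1 hp
    exact ⟨[], ⟨q, hq⟩, by simp [weave_singleton_nil, ed_nil_right]⟩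
  | cons u us ih =>
    obtain ⟨s, ss, rfl⟩ := List.exists_cons_of_length_eq_add_one hlen
    obtain ⟨q, hq⟩ := hne
    rw [nestedReachSet_cons] at hq
    obtain ⟨p', ⟨v', hp'⟩, hq'⟩ := mem_nestedReachSet_iff_exists.1 hq
    obtain ⟨v₀, hv₀, hpv₀⟩ := exists_length_lt_card_mem_evalFrom hp
    have hp'' : p' ∈ M.evalFrom (M.evalFrom P (v₀ ++ u)) v' := by
      rw [NFA.evalFrom_append]
      exact evalFrom_subset_evalFrom
        (evalFrom_subset_evalFrom (Set.singleton_subset_iff.2 hpv₀) u) v' hp'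
    obtain ⟨y, hy, hed⟩ := ih (Nat.succ_injective hlen) hp'' ⟨q, hq'⟩
    refine ⟨v₀ ++ (u ++ y), by rwa [← List.append_assoc, NFA.evalFrom_append], ?_⟩
    calc ed (weave (s :: ss) (u :: us)) (v₀ ++ (u ++ y))
        = ed (s ++ (u ++ weave ss us)) (v₀ ++ (u ++ y)) := by rw [weave_cons_cons]
      _ ≤ ed s v₀ + (ed u u + ed (weave ss us) y) :=
          (ed_append_append_le _ _ _ _).trans (by gcongr; exact ed_append_append_le _ _ _ _)
      _ ≤ (s.length + Fintype.card σ) +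
            (0 + (us.length * Fintype.card σ + (ss.map List.length).sum)) := by
          gcongr
          · exact (ed_le_length_add_length s v₀).trans (by gcongr)
          · exact (ed_self u).le
      _ = _ := by
          simp only [List.length_cons, List.map_cons, List.sum_cons]
          ring

theorem edWordLang_weave_le [Fintype σ] (hsafety : M.accept = Set.univ)
    (hreach : ∀ q : σ, ∃ w : List α, q ∈ M.evalFrom M.start w) {us ss : List (List α)}
    (hlen : ss.length = us.length + 1) (hne : (nestedReachSet M us Set.univ).Nonempty) :
    edWordLang (weave ss us) M.accepts ≤
      ((us.length * Fintype.card σ + (ss.map List.length).sum : ℕ) : ℕ∞) := by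
  obtain ⟨q, hq⟩ := hne
  obtain ⟨p, -, hpq⟩ := mem_nestedReachSet_iff_exists.1 hq
  obtain ⟨v, hv⟩ := hreach p
  obtain ⟨y, ⟨r, hr⟩, hed⟩ := exists_evalFrom_nonempty_ed_weave_le hlen hv ⟨q, hpq⟩
  have hy : y ∈ M.accepts := NFA.mem_accepts.2 ⟨r, hsafety ▸ Set.mem_univ r, hr⟩
  exact (iInf₂_le y hy).trans (Nat.cast_le.2 hed)

theorem edLang_eq_top_of_nestedReachSet_eq_empty {L : Language α} {us ss : List (List α)}
    (hlen : ss.length = us.length + 1)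
    (hpump : ∀ ℓ : ℕ, weave ss (us.map fun u => wpow u ℓ) ∈ L)
    (hempty : nestedReachSet M us Set.univ = ∅) : edLang L M.accepts = ⊤ := by
  refine ENat.eq_top_iff_forall_ge.2 fun N => le_iSup₂_of_le _ (hpump N) (le_iInf₂ fun y hy => ?_)
  obtain ⟨q, -, hq⟩ := NFA.mem_accepts.1 hy
  by_contra hlt
  have hne : (nestedReachSet M us Set.univ).Nonempty :=
    nestedReachSet_nonempty_of_ed_lt hlen (fun _ => Set.subset_univ _)
      (Nat.cast_lt.1 (not_le.1 hlt))
      ⟨q, evalFrom_subset_evalFrom (Set.subset_univ _) y hq⟩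
  exact hne.ne_empty hempty

theorem edWordLang_le_of_isCompactDecomp [Fintype σ] (hsafety : M.accept = Set.univ)
    (hreach : ∀ q : σ, ∃ w : List α, q ∈ M.evalFrom M.start w) {G : ContextFreeGrammarU α}
    [Fintype G.NT] {w : List α} {ss us : List (List α)} (hdecomp : IsCompactDecomp G w ss us)
    (hne : (nestedReachSet M us Set.univ).Nonempty) :
    edWordLang w M.accepts ≤
      (((2 ^ (Fintype.card G.NT + 1) - 2) * Fintype.card σ + 2 ^ Fintype.card G.NT : ℕ) : ℕ∞) := by
  obtain ⟨hlen, rfl, -, hsum, hcount⟩ := hdecomp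
  exact (edWordLang_weave_le hsafety hreach hlen hne).trans
    (Nat.cast_le.2 (add_le_add (Nat.mul_le_mul_right _ hcount) hsum))

end SafetyDistance

/-! ### Derivation forests -/

/-- `G.Yields S u w`: the word `w` is read off the leaves of a derivation forest of `G` whose roots
are the symbols of the sentential form `u` and whose nonterminals all lie in `S`. -/
inductive ContextFreeGrammarU.Yields {α : Type*} (G : ContextFreeGrammarU α) (S : Set G.NT) :
    List (Symbol α G.NT) → List α → Prop
  | nil : G.Yields S [] []
  | terminal (a : α) {u : List (Symbol α G.NT)} {w : List α} :
      G.Yields S u w → G.Yields S (.terminal a :: u) (a :: w)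
  | nonterminal {r : ContextFreeRule α G.NT} {u : List (Symbol α G.NT)} {x y : List α} :
      r ∈ G.rules → r.input ∈ S → G.Yields S r.output x → G.Yields S u y →
      G.Yields S (.nonterminal r.input :: u) (x ++ y)

namespace ContextFreeGrammarU

variable {α : Type*} {G : ContextFreeGrammarU α} {S : Set G.NT}

namespace Yields

theorem of_rule {r : ContextFreeRule α G.NT} {w : List α} (hr : r ∈ G.rules) (hS : r.input ∈ S)
    (h : G.Yields S r.output w) : G.Yields S [.nonterminal r.input] w := by
  simpa using nonterminal hr hS h nil

theorem mem_of_nonterminal_cons {A : G.NT} {u : List (Symbol α G.NT)} {w : List α}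
    (h : G.Yields S (.nonterminal A :: u) w) : A ∈ S := by
  cases h
  assumption

theorem mono {T : Set G.NT} (hST : S ⊆ T) {u : List (Symbol α G.NT)} {w : List α}
    (h : G.Yields S u w) : G.Yields T u w := by
  induction h with
  | nil => exact nil
  | terminal a _ ih => exact ih.terminal a
  | nonterminal hr hS _ _ ihx ihy => exact nonterminal hr (hST hS) ihx ihy

theorem append {u v : List (Symbol α G.NT)} {x y : List α} (hx : G.Yields S u x)
    (hy : G.Yields S v y) : G.Yields S (u ++ v) (x ++ y) := by
  induction hx with
  | nil => exact hy
  | terminal a _ ih => exact ih.terminal a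
  | nonterminal hr hS h _ _ ih =>
    rw [List.append_assoc]
    exact nonterminal hr hS h ih

theorem exists_of_append {u v : List (Symbol α G.NT)} {w : List α} (h : G.Yields S (u ++ v) w) :
    ∃ x y, w = x ++ y ∧ G.Yields S u x ∧ G.Yields S v y := by
  generalize hs : u ++ v = s at h
  induction h generalizing u with
  | nil =>
    obtain ⟨rfl, rfl⟩ := List.append_eq_nil_iff.1 hs
    exact ⟨[], [], rfl, nil, nil⟩
  | terminal a h ih =>
    rcases List.append_eq_cons_iff.1 hs with ⟨rfl, rfl⟩ | ⟨u, rfl, rfl⟩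
    · exact ⟨[], _, rfl, nil, h.terminal a⟩
    · obtain ⟨x, y, rfl, hx, hy⟩ := ih rfl
      exact ⟨a :: x, y, rfl, hx.terminal a, hy⟩
  | nonterminal hr hS ho hu _ ih =>
    rcases List.append_eq_cons_iff.1 hs with ⟨rfl, rfl⟩ | ⟨u, rfl, rfl⟩
    · exact ⟨[], _, rfl, nil, nonterminal hr hS ho hu⟩
    · obtain ⟨x, y, rfl, hx, hy⟩ := ih rfl
      exact ⟨_, y, (List.append_assoc _ _ _).symm, nonterminal hr hS ho hx, hy⟩

end Yields

theorem yields_map_terminal (w : List α) : G.Yields S (w.map .terminal) w := by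
  induction w with
  | nil => exact .nil
  | cons a w ih => exact ih.terminal a

theorem Derives.append_left {u v : List (Symbol α G.NT)} (h : G.Derives u v)
    (p : List (Symbol α G.NT)) : G.Derives (p ++ u) (p ++ v) :=
  h.lift (p ++ ·) fun _ _ ⟨r, hr, hrw⟩ => ⟨r, hr, hrw.append_left p⟩

theorem Derives.append_right {u v : List (Symbol α G.NT)} (h : G.Derives u v)
    (p : List (Symbol α G.NT)) : G.Derives (u ++ p) (v ++ p) :=
  h.lift (· ++ p) fun _ _ ⟨r, hr, hrw⟩ => ⟨r, hr, hrw.append_right p⟩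

theorem Yields.derives {u : List (Symbol α G.NT)} {w : List α} (h : G.Yields S u w) :
    G.Derives u (w.map .terminal) := by
  induction h with
  | nil => exact .refl
  | terminal a _ ih => exact Derives.append_left ih [.terminal a]
  | @nonterminal r u x y hr _ _ _ ihx ihy =>
    have hrule : G.Derives [.nonterminal r.input] r.output :=
      .single ⟨r, hr, ContextFreeRule.Rewrites.input_output⟩
    rw [List.map_append]
    exact (Derives.append_right (hrule.trans ihx) u).trans (Derives.append_left ihy _)

theorem Yields.of_produces {u v : List (Symbol α G.NT)} {w : List α} (huv : G.Produces u v)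
    (h : G.Yields Set.univ v w) : G.Yields Set.univ u w := by
  obtain ⟨r, hr, hrw⟩ := huv
  obtain ⟨p, q, rfl, rfl⟩ := hrw.exists_parts
  obtain ⟨_, z, rfl, hpo, hq⟩ := h.exists_of_append
  obtain ⟨x, y, rfl, hp, ho⟩ := hpo.exists_of_append
  exact (hp.append (.of_rule hr (Set.mem_univ _) ho)).append hq

theorem Yields.of_derives {u : List (Symbol α G.NT)} {w : List α}
    (h : G.Derives u (w.map .terminal)) : G.Yields Set.univ u w := by
  induction h using Relation.ReflTransGen.head_induction_on with
  | refl => exact yields_map_terminal w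
  | head hstep _ ih => exact .of_produces hstep ih

theorem mem_language_iff_yields {w : List α} :
    w ∈ G.language ↔ G.Yields Set.univ [.nonterminal G.initial] w :=
  ⟨Yields.of_derives, Yields.derives⟩

-- Among the subtrees rooted at `A`, choose one that contains no further `A` below its root.
theorem Yields.avoids_or_exists_lowest (A : G.NT) {u : List (Symbol α G.NT)} {w : List α}
    (h : G.Yields S u w) :
    G.Yields (S \ {A}) u w ∨ ∃ r ∈ G.rules, r.input = A ∧ ∃ v₁ x v₂, w = v₁ ++ x ++ v₂ ∧
      G.Yields (S \ {A}) r.output x ∧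
      ∀ x', G.Yields Set.univ [.nonterminal A] x' → G.Yields Set.univ u (v₁ ++ x' ++ v₂) := by
  induction h with
  | nil => exact .inl nil
  | terminal a _ ih =>
    refine ih.imp (fun h => h.terminal a) ?_
    rintro ⟨r, hr, hrA, v₁, x, v₂, rfl, hx, hctx⟩
    exact ⟨r, hr, hrA, a :: v₁, x, v₂, rfl, hx, fun x' hx' => (hctx x' hx').terminal a⟩
  | @nonterminal r u x y hr hS ho hu iho ihu =>
    rcases iho with ho' | ⟨r', hr', hrA, v₁, z, v₂, rfl, hz, hctx⟩
    · rcases ihu with hu' | ⟨r', hr', hrA, v₁, z, v₂, rfl, hz, hctx⟩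
      · by_cases hrA : r.input = A
        · exact .inr ⟨r, hr, hrA, [], x, y, rfl, ho', fun x' hx' =>
            hrA ▸ hx'.append (hu.mono (Set.subset_univ S))⟩
        · exact .inl (nonterminal hr ⟨hS, hrA⟩ ho' hu')
      · refine .inr ⟨r', hr', hrA, x ++ v₁, z, v₂, by simp, hz, fun x' hx' => ?_⟩
        simpa using nonterminal hr (Set.mem_univ _) (ho.mono (Set.subset_univ S)) (hctx x' hx')
    · refine .inr ⟨r', hr', hrA, v₁, z, v₂ ++ y, by simp, hz, fun x' hx' => ?_⟩
      simpa using nonterminal hr (Set.mem_univ _) (hctx x' hx') (hu.mono (Set.subset_univ S))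

end ContextFreeGrammarU

/-! ### Compact decompositions -/

section PumpFamily

variable {α : Type*}

/-- `F ℓ = s₁u₁^ℓ⋯s_k u_k^ℓ s_{k+1}` for fixed words with at most `k` pumped factors `u_i` and
separators `s_i` of total length at most `c`; the unpumped word is `F 1`. -/
def IsPumpFamily (F : ℕ → List α) (c k : ℕ) : Prop :=
  ∃ ss us : List (List α), ss.length = us.length + 1 ∧
    (∀ ℓ, weave ss (us.map fun u => wpow u ℓ) = F ℓ) ∧
    (ss.map List.length).sum ≤ c ∧ us.length ≤ k

namespace IsPumpFamily

theorem const (w : List α) : IsPumpFamily (fun _ => w) w.length 0 :=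
  ⟨[w], [], rfl, fun _ => weave_singleton_nil w, by simp, le_rfl⟩

theorem wpow (u : List α) : IsPumpFamily (wpow u) 0 1 :=
  ⟨[[], []], [u], rfl, fun ℓ => by simp [weave], by simp, le_rfl⟩

theorem mono {F : ℕ → List α} {c c' k k' : ℕ} (h : IsPumpFamily F c k) (hc : c ≤ c')
    (hk : k ≤ k') : IsPumpFamily F c' k' := by
  obtain ⟨ss, us, hlen, hF, hsum, hcount⟩ := h
  exact ⟨ss, us, hlen, hF, hsum.trans hc, hcount.trans hk⟩

theorem append {F F' : ℕ → List α} {c c' k k' : ℕ} (h : IsPumpFamily F c k)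
    (h' : IsPumpFamily F' c' k') : IsPumpFamily (fun ℓ => F ℓ ++ F' ℓ) (c + c') (k + k') := by
  obtain ⟨ss, us, hlen, hF, hsum, hcount⟩ := h
  obtain ⟨ss', us', hlen', hF', hsum', hcount'⟩ := h'
  obtain ⟨ts, htlen, htsum, hweave⟩ := exists_weave_eq_weave_append_weave hlen hlen'
  refine ⟨ts, us ++ us', htlen, fun ℓ => by rw [hweave, hF, hF'], ?_, ?_⟩
  · exact htsum.trans_le (add_le_add hsum hsum')
  · exact List.length_append.trans_le (add_le_add hcount hcount')

end IsPumpFamily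

end PumpFamily

namespace ContextFreeGrammarU

variable {α : Type*} {G : ContextFreeGrammarU α} {S : Set G.NT}

/-- `G.IsPumpable u w c k`: the word `w` is the member `F 1` of a pump family `F` with parameters
`c` and `k` all of whose members are yielded by the sentential form `u`. -/
def IsPumpable (G : ContextFreeGrammarU α) (u : List (Symbol α G.NT)) (w : List α) (c k : ℕ) :
    Prop :=
  ∃ F : ℕ → List α, F 1 = w ∧ IsPumpFamily F c k ∧ ∀ ℓ, G.Yields Set.univ u (F ℓ)

namespace IsPumpable

theorem nil : G.IsPumpable [] [] 0 0 :=
  ⟨fun _ => [], rfl, .const [], fun _ => .nil⟩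

theorem terminal (a : α) : G.IsPumpable [.terminal a] [a] 1 0 :=
  ⟨fun _ => [a], rfl, .const [a], fun _ => yields_map_terminal [a]⟩

theorem of_rule {r : ContextFreeRule α G.NT} (hr : r ∈ G.rules) {w : List α} {c k : ℕ}
    (h : G.IsPumpable r.output w c k) : G.IsPumpable [.nonterminal r.input] w c k := by
  obtain ⟨F, hw, hF, hyields⟩ := h
  exact ⟨F, hw, hF, fun ℓ => .of_rule hr (Set.mem_univ _) (hyields ℓ)⟩

theorem mono {u : List (Symbol α G.NT)} {w : List α} {c c' k k' : ℕ} (h : G.IsPumpable u w c k)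
    (hc : c ≤ c') (hk : k ≤ k') : G.IsPumpable u w c' k' := by
  obtain ⟨F, hw, hF, hyields⟩ := h
  exact ⟨F, hw, hF.mono hc hk, hyields⟩

theorem append {u u' : List (Symbol α G.NT)} {w w' : List α} {c c' k k' : ℕ}
    (h : G.IsPumpable u w c k) (h' : G.IsPumpable u' w' c' k') :
    G.IsPumpable (u ++ u') (w ++ w') (c + c') (k + k') := by
  obtain ⟨F, rfl, hF, hyields⟩ := h
  obtain ⟨F', rfl, hF', hyields'⟩ := h'
  exact ⟨_, rfl, hF.append hF', fun ℓ => (hyields ℓ).append (hyields' ℓ)⟩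

theorem append_append {u : List (Symbol α G.NT)} {v₁ x v₂ : List α} {c k : ℕ}
    (h : G.IsPumpable u x c k)
    (hctx : ∀ x', G.Yields Set.univ u x' → G.Yields Set.univ u (v₁ ++ x' ++ v₂)) :
    G.IsPumpable u (v₁ ++ x ++ v₂) c (k + 2) := by
  obtain ⟨F, rfl, hF, hyields⟩ := h
  refine ⟨fun ℓ => wpow v₁ ℓ ++ F ℓ ++ wpow v₂ ℓ, by simp only [wpow_one], ?_, fun ℓ => ?_⟩
  · exact (((IsPumpFamily.wpow v₁).append hF).append (.wpow v₂)).mono (by omega) (by omega)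
  · exact wpow_append_append_wpow_mem (L := {x | G.Yields Set.univ u x}) hctx (hyields ℓ) ℓ

end IsPumpable

theorem Yields.isPumpable_of_forall_nonterminal {c k : ℕ} (hc : 0 < c)
    (htree : ∀ A w, G.Yields S [.nonterminal A] w → G.IsPumpable [.nonterminal A] w c k)
    {u : List (Symbol α G.NT)} {w : List α} (h : G.Yields S u w) :
    G.IsPumpable u w (u.length * c) (u.length * k) := by
  induction h with
  | nil => exact IsPumpable.nil.mono (Nat.zero_le _) (Nat.zero_le _)
  | @terminal a u w _ ih =>
    refine ((IsPumpable.terminal a).append ih).mono ?_ ?_ <;>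
      rw [List.length_cons, Nat.succ_mul] <;> omega
  | @nonterminal r u x y hr hS ho _ _ ih =>
    refine ((htree _ x (.of_rule hr hS ho)).append ih).mono ?_ ?_ <;>
      rw [List.length_cons, Nat.succ_mul] <;> omega

theorem Yields.isPumpable {b : ℕ} (hb : 0 < b) (hG : ∀ r ∈ G.rules, r.output.length ≤ b) {n : ℕ}
    (hS : S.encard ≤ n) {u : List (Symbol α G.NT)} {w : List α} (h : G.Yields S u w) :
    G.IsPumpable u w (u.length * b ^ n) (u.length * (2 * ∑ i ∈ Finset.range n, b ^ i)) := by
  induction n generalizing S u w with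
  | zero =>
    obtain rfl : S = ∅ := Set.encard_eq_zero.1 (nonpos_iff_eq_zero.1 hS)
    exact h.isPumpable_of_forall_nonterminal (by positivity)
      fun A w hA => hA.mem_of_nonterminal_cons.elim
  | succ n ih =>
    refine h.isPumpable_of_forall_nonterminal (by positivity) fun A w hA => ?_
    rcases hA.avoids_or_exists_lowest A with havoid | ⟨r, hr, rfl, v₁, x, v₂, rfl, hx, hctx⟩
    · exact absurd rfl havoid.mem_of_nonterminal_cons.2
    have hcard : (S \ {r.input}).encard ≤ n := by
      rw [← Set.encard_sdiff_singleton_add_one hA.mem_of_nonterminal_cons, Nat.cast_succ] at hS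
      exact (ENat.add_le_add_iff_right ENat.one_ne_top).1 hS
    refine ((IsPumpable.of_rule hr (ih hcard hx)).append_append hctx).mono ?_ ?_
    · rw [pow_succ']
      gcongr
      exact hG r hr
    · calc r.output.length * (2 * ∑ i ∈ Finset.range n, b ^ i) + 2
          ≤ b * (2 * ∑ i ∈ Finset.range n, b ^ i) + 2 := by
            gcongr
            exact hG r hr
        _ = 2 * ∑ i ∈ Finset.range (n + 1), b ^ i := by
            rw [geom_sum_succ]
            ring

theorem exists_isCompactDecomp [Fintype G.NT] (hG : ∀ r ∈ G.rules, r.output.length ≤ 2)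
    {w : List α} (hw : w ∈ G.language) : ∃ ss us, IsCompactDecomp G w ss us := by
  have hcard : (Set.univ : Set G.NT).encard ≤ Fintype.card G.NT := by simp
  obtain ⟨F, rfl, ⟨ss, us, hlen, hF, hsum, hcount⟩, hyields⟩ :=
    (mem_language_iff_yields.1 hw).isPumpable two_pos hG hcard
  refine ⟨ss, us, hlen, ?_, fun ℓ => ?_, by simpa using hsum, ?_⟩
  · simp [← hF, wpow_one]
  · exact mem_language_iff_yields.2 (hF ℓ ▸ hyields ℓ)
  · rw [Nat.geomSum_eq le_rfl, List.length_singleton] at hcount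
    rw [pow_succ]
    omega

theorem IsCNF.length_output_le_two (hG : G.IsCNF) : ∀ r ∈ G.rules, r.output.length ≤ 2 := by
  intro r hr
  rcases hG r hr with ⟨z, u, h⟩ | ⟨a, h⟩ | ⟨-, h⟩ <;> simp [h]

end ContextFreeGrammarU

theorem exists_isCompactDecomp_nestedReachSet_eq_empty {α σ : Type*} [DecidableEq α] [Fintype σ]
    {G : ContextFreeGrammarU α} [Fintype G.NT] (hG : ∀ r ∈ G.rules, r.output.length ≤ 2)
    {M : NFA α σ} (hsafety : M.accept = Set.univ)
    (hreach : ∀ q : σ, ∃ w : List α, q ∈ M.evalFrom M.start w)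
    (hlt : (((2 ^ (Fintype.card G.NT + 1) - 2) * Fintype.card σ + 2 ^ Fintype.card G.NT : ℕ) : ℕ∞)
      < edLang G.language M.accepts) :
    ∃ w ∈ G.language, ∃ ss us : List (List α),
      IsCompactDecomp G w ss us ∧ nestedReachSet M us Set.univ = ∅ := by
  obtain ⟨w, hw, hltw⟩ : ∃ w, ∃ _ : w ∈ G.language, _ < edWordLang w M.accepts := by
    simpa only [edLang, lt_iSup_iff] using hlt
  obtain ⟨ss, us, hdecomp⟩ := G.exists_isCompactDecomp hG hw
  exact ⟨w, hw, ss, us, hdecomp, Set.not_nonempty_iff_eq_empty.1 fun hne =>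
    hltw.not_ge (edWordLang_le_of_isCompactDecomp hsafety hreach hdecomp hne)⟩

theorem edLang_infinite_iff_gt_bound_iff_nested_reach_empty_general {α σ : Type*}
    [DecidableEq α] [Fintype σ] (G : ContextFreeGrammarU α) [Fintype G.NT]
    (hG : ∀ r ∈ G.rules, r.output.length ≤ 2)
    (M : NFA α σ) (hsafety : M.accept = Set.univ)
    (hreach : ∀ q : σ, ∃ w : List α, q ∈ M.evalFrom M.start w) :
    (edLang G.language M.accepts = ⊤ ↔
      (((2 ^ (Fintype.card G.NT + 1) - 2) * Fintype.card σ + 2 ^ Fintype.card G.NT : ℕ) : ℕ∞)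
        < edLang G.language M.accepts) ∧
    (edLang G.language M.accepts = ⊤ ↔
      ∃ w ∈ G.language, ∃ ss us : List (List α), IsCompactDecomp G w ss us ∧
        us.foldl (fun S u => reachSet M u S) Set.univ = ∅) := by
  have top_of_empty : (∃ w ∈ G.language, ∃ ss us : List (List α), IsCompactDecomp G w ss us ∧
      nestedReachSet M us Set.univ = ∅) → edLang G.language M.accepts = ⊤ := by
    rintro ⟨-, -, ss, us, ⟨hlen, -, hpump, -, -⟩, hempty⟩
    exact edLang_eq_top_of_nestedReachSet_eq_empty hlen hpump hempty
  have empty_of_gt := exists_isCompactDecomp_nestedReachSet_eq_empty hG hsafety hreach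
  have gt_of_top (h : edLang G.language M.accepts = ⊤) (N : ℕ) :
      (N : ℕ∞) < edLang G.language M.accepts := h ▸ ENat.natCast_lt_top N
  exact ⟨⟨fun h => gt_of_top h _, fun h => top_of_empty (empty_of_gt h)⟩,
    fun h => empty_of_gt (gt_of_top h _), top_of_empty⟩

/-- Equivalent characterizations of infinite edit distance from a CNF grammar
to a safety NFA in which every state is reachable. -/
theorem edLang_infinite_iff_gt_bound_iff_nested_reach_empty {α σ : Type*}
    [Fintype α] [DecidableEq α] [Fintype σ]
    (G : ContextFreeGrammarU α) [Fintype G.NT] (hG : G.IsCNF)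
    (M : NFA α σ) (hsafety : M.accept = Set.univ)
    (hreach : ∀ q : σ, ∃ w : List α, q ∈ M.evalFrom M.start w) :
    (edLang G.language M.accepts = ⊤ ↔
      (((2 ^ (Fintype.card G.NT + 1) - 2) * Fintype.card σ + 2 ^ Fintype.card G.NT : ℕ) : ℕ∞)
        < edLang G.language M.accepts) ∧
    (edLang G.language M.accepts = ⊤ ↔
      ∃ w ∈ G.language, ∃ ss us : List (List α), IsCompactDecomp G w ss us ∧
        us.foldl (fun S u => reachSet M u S) Set.univ = ∅) := by
  exact edLang_infinite_iff_gt_bound_iff_nested_reach_empty_general G hG.length_output_le_two M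
    hsafety hreach
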